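/- Two finite groups G_1 and G_2 are both almost monomial if and only if their direct product G_1 × G_2 is almost monomial. -/

import Mathlib

open scoped Classical

noncomputable section

/-- The inner product of two class functions on a finite group. -/
def cdot (G : Type*) [Group G] [Finite G] (f h : G → ℂ) : ℂ :=
  (Nat.card G : ℂ)⁻¹ * ∑ᶠ g : G, f g * (starRingEnd ℂ) (h g)

/-- `f` is the character of a finite-dimensional complex representation of `G`. -/
def IsChar (G : Type*) [Group G] (f : G → ℂ) : Prop :=
  ∃ (n : ℕ) (ρ : G →* Matrix.GeneralLinearGroup (Fin n) ℂ),
    f = fun g => Matrix.trace ((ρ g : Matrix (Fin n) (Fin n) ℂ))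

/-- `f` is a linear (degree one) character of `G`. -/
def IsLinearChar (G : Type*) [Group G] (f : G → ℂ) : Prop :=
  ∃ ρ : G →* ℂˣ, f = fun g => (ρ g : ℂ)

/-- `f` is an irreducible character of `G`: a character of norm one. -/
def IsIrrChar (G : Type*) [Group G] [Finite G] (f : G → ℂ) : Prop :=
  IsChar G f ∧ cdot G f f = 1

/-- The class function on `G` induced from a class function on a subgroup `H`. -/
def ind {G : Type*} [Group G] [Finite G] (H : Subgroup G) (f : H → ℂ) : G → ℂ :=
  fun g => (Nat.card H : ℂ)⁻¹ *
    ∑ᶠ x : G, if h : x * g * x⁻¹ ∈ H then f ⟨x * g * x⁻¹, h⟩ else 0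

/-- Restriction of a class function on `G` to a subgroup `H`. -/
def res {G : Type*} [Group G] (H : Subgroup G) (f : G → ℂ) : H → ℂ := fun x => f x

/-- Restriction of a class function on a subgroup `K` to a smaller subgroup `H ≤ K`. -/
def resTo {G : Type*} [Group G] {K H : Subgroup G} (hHK : H ≤ K) (f : K → ℂ) : H → ℂ :=
  fun x => f ⟨x.1, hHK x.2⟩

/-- Induction of a class function from a subgroup `H` to a larger subgroup `K`. -/
def indTo {G : Type*} [Group G] [Finite G] (K H : Subgroup G) (f : H → ℂ) : K → ℂ :=
  ind (H.subgroupOf K) fun y => f ⟨y.1.1, Subgroup.mem_subgroupOf.mp y.2⟩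

/-- `G` is almost monomial. -/
def IsAlmostMonomial (G : Type*) [Group G] [Finite G] : Prop :=
  ∀ χ φ : G → ℂ, IsIrrChar G χ → IsIrrChar G φ → χ ≠ φ →
    ∃ (H : Subgroup G) (l : H → ℂ), IsLinearChar H l ∧
      cdot G (ind H l) χ ≠ 0 ∧ cdot G (ind H l) φ = 0

/-- `G` is relative almost monomial with respect to the (normal) subgroup `N`. -/
def IsRelAlmostMonomial (G : Type*) [Group G] [Finite G] (N : Subgroup G) : Prop :=
  ∀ χ φ : G → ℂ, IsIrrChar G χ → IsIrrChar G φ → χ ≠ φ →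
    ∃ (H : Subgroup G) (hNH : N ≤ H) (ψ : H → ℂ), IsIrrChar H ψ ∧
      IsIrrChar N (resTo hNH ψ) ∧
      cdot G (ind H ψ) χ ≠ 0 ∧ cdot G (ind H ψ) φ = 0

/-- `H` is a subnormal subgroup of `G`. -/
def IsSubnormalSubgroup (G : Type*) [Group G] (H : Subgroup G) : Prop :=
  ∃ (n : ℕ) (c : Fin (n + 1) → Subgroup G), c 0 = H ∧ c (Fin.last n) = ⊤ ∧
    ∀ i : Fin n, ((c i.castSucc).subgroupOf (c i.succ)).Normal

/-- `G` is normally almost monomial. -/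
def IsNormallyAlmostMonomial (G : Type*) [Group G] [Finite G] : Prop :=
  ∀ χ φ : G → ℂ, IsIrrChar G χ → IsIrrChar G φ → χ ≠ φ →
    ∃ (H : Subgroup G), H.Normal ∧ ∃ l : H → ℂ, IsLinearChar H l ∧
      cdot G (ind H l) χ ≠ 0 ∧ cdot G (ind H l) φ = 0

/-- `G` is subnormally almost monomial. -/
def IsSubnormallyAlmostMonomial (G : Type*) [Group G] [Finite G] : Prop :=
  ∀ χ φ : G → ℂ, IsIrrChar G χ → IsIrrChar G φ → χ ≠ φ →
    ∃ (H : Subgroup G), IsSubnormalSubgroup G H ∧ ∃ l : H → ℂ, IsLinearChar H l ∧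
      cdot G (ind H l) χ ≠ 0 ∧ cdot G (ind H l) φ = 0

/-- `G` is quasi-monomial. -/
def IsQuasiMonomial (G : Type*) [Group G] [Finite G] : Prop :=
  ∀ χ : G → ℂ, IsIrrChar G χ → ∃ (H : Subgroup G) (l : H → ℂ) (d : ℕ),
    IsLinearChar H l ∧ 1 ≤ d ∧ ind H l = fun g => (d : ℂ) * χ g

/-- The set of irreducible characters of `G`. -/
def IrrSet (G : Type*) [Group G] [Finite G] : Set (G → ℂ) := {χ | IsIrrChar G χ}

/-- `f` belongs to the semigroup `M(G)` generated by monomial characters. -/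
def InMG (G : Type*) [Group G] [Finite G] (f : G → ℂ) : Prop :=
  ∃ (k : ℕ) (H : Fin (k + 1) → Subgroup G) (l : ∀ i, (H i) → ℂ),
    (∀ i, IsLinearChar (H i) (l i)) ∧ f = fun g => ∑ i, ind (H i) (l i) g

/-- The set of irreducible constituents of a class function `f`. -/
def Cons (G : Type*) [Group G] [Finite G] (f : G → ℂ) : Set (G → ℂ) :=
  {φ | IsIrrChar G φ ∧ cdot G φ f ≠ 0}

/-- `L_t(G)`: the number of constituent-sets of size `t` of characters in `M(G)`. -/
def Lt (G : Type*) [Group G] [Finite G] (t : ℕ) : ℕ :=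
  Nat.card {S : Set (G → ℂ) // ∃ f, InMG G f ∧ Cons G f = S ∧ Nat.card S = t}

end


lemma Representation.isChar_character {G V : Type*} [Group G] [AddCommGroup V] [Module ℂ V]
    [FiniteDimensional ℂ V] (ρ : Representation ℂ G V) : IsChar G ρ.character := by
  let b := Module.finBasis ℂ V
  refine ⟨_, (Units.map (LinearMap.toMatrixAlgEquiv b).toMonoidHom).comp ρ.toHomUnits, ?_⟩
  ext g
  exact LinearMap.trace_eq_matrix_trace ℂ b (ρ g)

lemma IsChar.exists_representation {G : Type*} [Group G] {f : G → ℂ} (hf : IsChar G f) :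
    ∃ (n : ℕ) (ρ : Representation ℂ G (Fin n → ℂ)), f = ρ.character := by
  obtain ⟨n, ρ, rfl⟩ := hf
  refine ⟨n, (Matrix.toLinAlgEquiv' : Matrix (Fin n) (Fin n) ℂ ≃ₐ[ℂ] _).toMonoidHom.comp
    ((Units.coeHom _).comp ρ), ?_⟩
  ext g
  exact (Matrix.trace_toLin'_eq _).symm

lemma IsChar.map_conj {G : Type*} [Group G] {f : G → ℂ} (hf : IsChar G f) (x g : G) :
    f (x * g * x⁻¹) = f g := by
  obtain ⟨n, ρ, rfl⟩ := hf.exists_representation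
  exact ρ.char_conj g x

lemma IsChar.comp {G Q : Type*} [Group G] [Group Q] {f : Q → ℂ} (hf : IsChar Q f)
    (π : G →* Q) :
    IsChar G (f ∘ π) := by
  obtain ⟨n, ρ, rfl⟩ := hf
  exact ⟨n, ρ.comp π, rfl⟩

lemma IsChar.mul {G : Type*} [Group G] {f h : G → ℂ} (hf : IsChar G f) (hh : IsChar G h) :
    IsChar G (f * h) := by
  obtain ⟨n, ρ, rfl⟩ := hf.exists_representation
  obtain ⟨m, σ, rfl⟩ := hh.exists_representation
  rw [← Representation.char_tensor]
  exact Representation.isChar_character _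

open Matrix in
open scoped ComplexOrder in
lemma IsChar.map_inv {G : Type*} [Group G] [Finite G] {f : G → ℂ} (hf : IsChar G f) (g : G) :
    f g⁻¹ = (starRingEnd ℂ) (f g) := by
  have := Fintype.ofFinite G
  obtain ⟨n, ρ, rfl⟩ := hf
  set A : G → Matrix (Fin n) (Fin n) ℂ := fun g => ρ g with hA
  have hmul (x y : G) : A (x * y) = A x * A y := by simp [hA]
  have hone : A 1 = 1 := by simp [hA]
  set M := ∑ x : G, (A x)ᴴ * A x with hM
  have hpos : M.PosDef := by
    rw [hM, ← Finset.add_sum_erase _ _ (Finset.mem_univ (1 : G)), hone]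
    refine Matrix.PosDef.add_posSemidef (by simpa using Matrix.PosDef.one) ?_
    exact Matrix.posSemidef_sum _ fun x _ => Matrix.posSemidef_conjTranspose_mul_self _
  have hinv : (A g)ᴴ * M * A g = M := by
    rw [hM, Finset.mul_sum, Finset.sum_mul]
    conv_rhs => rw [← Equiv.sum_comp (Equiv.mulRight g)]
    refine Finset.sum_congr rfl fun x _ => ?_
    simp [hmul, Matrix.mul_assoc]
  have hdet : IsUnit M.det := (Matrix.isUnit_iff_isUnit_det _).mp hpos.isUnit
  have key : (A g)ᴴ = M * A g⁻¹ * M⁻¹ := by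
    calc (A g)ᴴ = ((A g)ᴴ * M * (A g * A g⁻¹)) * M⁻¹ := by
          rw [← hmul, mul_inv_cancel, hone, Matrix.mul_one,
            Matrix.mul_nonsing_inv_cancel_right _ _ hdet]
      _ = M * A g⁻¹ * M⁻¹ := by rw [← Matrix.mul_assoc, hinv]
  change (A g⁻¹).trace = star (A g).trace
  rw [← Matrix.trace_conjTranspose, key, Matrix.trace_mul_comm,
    Matrix.nonsing_inv_mul_cancel_left _ _ hdet]

lemma cdot_character {G V W : Type*} [Group G] [Finite G] [AddCommGroup V] [Module ℂ V]
    [FiniteDimensional ℂ V] [AddCommGroup W] [Module ℂ W] [FiniteDimensional ℂ W]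
    (ρ : Representation ℂ G V) (σ : Representation ℂ G W) :
    cdot G σ.character ρ.character = Module.finrank ℂ (ρ.IntertwiningMap σ) := by
  have := Fintype.ofFinite G
  have : Invertible (Nat.card G : ℂ) := invertibleOfNonzero (Nat.cast_ne_zero.2 Nat.card_pos.ne')
  rw [← Representation.card_inv_mul_sum_char_mul_char_eq_finrank, cdot,
    finsum_eq_sum_of_fintype]
  simp only [ρ.isChar_character.map_inv]

lemma Representation.IsIrreducible.isIrrChar {G V : Type*} [Group G] [Finite G] [AddCommGroup V]
    [Module ℂ V] [FiniteDimensional ℂ V] (ρ : Representation ℂ G V) [ρ.IsIrreducible] :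
    IsIrrChar G ρ.character :=
  ⟨ρ.isChar_character, by simp [cdot_character]⟩

open Representation in
lemma Representation.exists_character_eq_add {G V : Type*} [Group G] [Finite G] [AddCommGroup V]
    [Module ℂ V] [FiniteDimensional ℂ V] [Nontrivial V] (ρ : Representation ℂ G V)
    (hρ : ¬ ρ.IsIrreducible) :
    ∃ p q : Subrepresentation ρ, IsCompl p.toSubmodule q.toSubmodule ∧
      p.toSubmodule ≠ ⊥ ∧ q.toSubmodule ≠ ⊥ ∧
      ρ.character = p.toRepresentation.character + q.toRepresentation.character := by
  have : Nontrivial (Subrepresentation ρ) :=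
    ⟨⊥, ⊤, fun h => bot_ne_top (congrArg Subrepresentation.toSubmodule h)⟩
  obtain ⟨p, hp⟩ : ∃ p : Subrepresentation ρ, ¬ (p = ⊥ ∨ p = ⊤) := by
    by_contra! h
    exact hρ ⟨h⟩
  rw [not_or] at hp
  have : NeZero (Nat.card G : ℂ) := ⟨Nat.cast_ne_zero.2 Nat.card_pos.ne'⟩
  obtain ⟨q, hq⟩ := exists_isCompl p
  have hc : IsCompl p.toSubmodule q.toSubmodule :=
    ⟨disjoint_iff.2 (congrArg Subrepresentation.toSubmodule hq.inf_eq_bot),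
      codisjoint_iff.2 (congrArg Subrepresentation.toSubmodule hq.sup_eq_top)⟩
  refine ⟨p, q, hc, fun h => hp.1 (Subrepresentation.toSubmodule_injective h), fun h => hp.2 ?_, ?_⟩
  · apply Subrepresentation.toSubmodule_injective
    rw [h] at hc
    exact eq_top_of_isCompl_bot hc
  · ext g
    have hint : DirectSum.IsInternal (fun b : Bool => cond b p.toSubmodule q.toSubmodule) :=
      (DirectSum.isInternal_submodule_iff_isCompl _ (i := true) (j := false) (by simp)
        (by ext b; cases b <;> simp)).2 hc
    have := LinearMap.trace_eq_sum_trace_restrict hint (f := ρ g) (by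
      rintro (_ | _)
      · exact q.apply_mem_toSubmodule g
      · exact p.apply_mem_toSubmodule g)
    rw [Fintype.sum_bool] at this
    exact this

section cdot

variable {G : Type*} [Group G] [Finite G]

lemma cdot_eq_sum [Fintype G] (f h : G → ℂ) :
    cdot G f h = (Nat.card G : ℂ)⁻¹ * ∑ g : G, f g * (starRingEnd ℂ) (h g) := by
  rw [cdot, finsum_eq_sum_of_fintype]

@[simp]
lemma cdot_zero_right (f : G → ℂ) : cdot G f 0 = 0 := by
  simp [cdot]

lemma cdot_add_right (f h k : G → ℂ) : cdot G f (h + k) = cdot G f h + cdot G f k := by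
  have := Fintype.ofFinite G
  simp [cdot_eq_sum, mul_add, Finset.sum_add_distrib]

lemma cdot_add_left (f h k : G → ℂ) : cdot G (f + h) k = cdot G f k + cdot G h k := by
  have := Fintype.ofFinite G
  simp [cdot_eq_sum, mul_add, add_mul, Finset.sum_add_distrib]

lemma cdot_comp_of_surjective {Q : Type*} [Group Q] [Finite Q] (π : G →* Q)
    (hπ : Function.Surjective π) (f h : Q → ℂ) : cdot G (f ∘ π) (h ∘ π) = cdot Q f h := by
  have := Fintype.ofFinite G
  have := Fintype.ofFinite Q
  set c := (Finset.univ.filter fun g : G => π g = 1).card with hc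
  have hfib (q : Q) : (Finset.univ.filter fun g : G => π g = q).card = c :=
    MonoidHom.card_fiber_eq_of_mem_range π (hπ q) (hπ 1)
  have hsum (F : Q → ℂ) : ∑ g : G, F (π g) = c * ∑ q : Q, F q := by
    rw [← Finset.sum_fiberwise (Finset.univ : Finset G) π, Finset.mul_sum]
    refine Finset.sum_congr rfl fun q _ => ?_
    rw [Finset.sum_congr rfl (g := fun _ => F q) (by simp +contextual), Finset.sum_const, hfib,
      nsmul_eq_mul]
  have hcard : (Nat.card G : ℂ) = c * Nat.card Q := by
    simpa using hsum fun _ => 1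
  have hc0 : (c : ℂ) ≠ 0 := by
    intro h0
    rw [h0, zero_mul] at hcard
    exact Nat.card_pos.ne' (Nat.cast_eq_zero.1 hcard)
  rw [cdot_eq_sum, cdot_eq_sum, hcard]
  simp only [Function.comp_apply]
  rw [hsum fun q => f q * (starRingEnd ℂ) (h q)]
  field_simp

lemma cdot_prod {H : Type*} [Group H] [Finite H] (f f' : G → ℂ) (h h' : H → ℂ) :
    cdot (G × H) ((f ∘ Prod.fst) * (h ∘ Prod.snd)) ((f' ∘ Prod.fst) * (h' ∘ Prod.snd)) =
      cdot G f f' * cdot H h h' := by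
  have := Fintype.ofFinite G
  have := Fintype.ofFinite H
  simp only [cdot_eq_sum, Nat.card_prod, Nat.cast_mul, mul_inv, Pi.mul_apply, Function.comp_apply,
    map_mul]
  rw [mul_mul_mul_comm, Finset.sum_mul_sum, Fintype.sum_prod_type]
  refine congrArg _ (Finset.sum_congr rfl fun g _ => Finset.sum_congr rfl fun k _ => ?_)
  ring

end cdot

namespace IsIrrChar

variable {G : Type*} [Group G] [Finite G]

lemma ne_zero {f : G → ℂ} (hf : IsIrrChar G f) : f ≠ 0 := by
  rintro rfl
  simpa using hf.2

lemma apply_one_ne_zero {f : G → ℂ} (hf : IsIrrChar G f) : f 1 ≠ 0 := by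
  intro h
  apply hf.ne_zero
  obtain ⟨n, ρ, rfl⟩ := hf.1
  obtain rfl : n = 0 := by simpa using h
  ext g
  simp [Matrix.trace]

lemma exists_isIrreducible {f : G → ℂ} (hf : IsIrrChar G f) :
    ∃ (n : ℕ) (ρ : Representation ℂ G (Fin n → ℂ)), ρ.IsIrreducible ∧ f = ρ.character := by
  obtain ⟨n, ρ, rfl⟩ := hf.1.exists_representation
  refine ⟨n, ρ, ?_, rfl⟩
  have hn : Nontrivial (Fin n → ℂ) := by
    rw [← Module.finrank_pos_iff (R := ℂ), Nat.pos_iff_ne_zero]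
    intro h
    apply hf.apply_one_ne_zero
    rw [ρ.char_one, h, Nat.cast_zero]
  by_contra h
  obtain ⟨p, q, -, hp, hq, hpq⟩ := ρ.exists_character_eq_add h
  have hpos (p : Subrepresentation ρ) (hp : p.toSubmodule ≠ ⊥) :
      0 < Module.finrank ℂ (p.toRepresentation.IntertwiningMap p.toRepresentation) := by
    have := Submodule.nontrivial_iff_ne_bot.2 hp
    obtain ⟨v, hv⟩ := exists_ne (0 : p.toSubmodule)
    exact (Module.finrank_pos_iff_exists_ne_zero (R := ℂ)).2
      ⟨Representation.IntertwiningMap.id p.toRepresentation,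
        fun h => hv (by simpa using DFunLike.congr_fun h v)⟩
  have h1 := hf.2
  rw [hpq, cdot_add_left, cdot_add_right, cdot_add_right] at h1
  simp only [cdot_character] at h1
  norm_cast at h1
  have := hpos p hp
  have := hpos q hq
  omega

lemma eq_of_cdot_ne_zero {f h : G → ℂ} (hf : IsIrrChar G f) (hh : IsIrrChar G h)
    (hfh : cdot G f h ≠ 0) : f = h := by
  obtain ⟨n, ρ, hρ, rfl⟩ := hf.exists_isIrreducible
  obtain ⟨m, σ, hσ, rfl⟩ := hh.exists_isIrreducible
  rw [cdot_character] at hfh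
  by_contra hne
  have : IsEmpty (σ.Equiv ρ) := ⟨fun e => hne (Representation.char_iso e).symm⟩
  exact hfh (by rw [Module.finrank_zero_of_subsingleton, Nat.cast_zero])

lemma prod {H : Type*} [Group H] [Finite H] {f : G → ℂ} {h : H → ℂ} (hf : IsIrrChar G f)
    (hh : IsIrrChar H h) : IsIrrChar (G × H) ((f ∘ Prod.fst) * (h ∘ Prod.snd)) :=
  ⟨(hf.1.comp (MonoidHom.fst G H)).mul (hh.1.comp (MonoidHom.snd G H)), by
    rw [cdot_prod, hf.2, hh.2, one_mul]⟩

lemma comp {Q : Type*} [Group Q] [Finite Q] {f : Q → ℂ} (hf : IsIrrChar Q f) (π : G →* Q)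
    (hπ : Function.Surjective π) : IsIrrChar G (f ∘ π) :=
  ⟨hf.1.comp π, by rw [cdot_comp_of_surjective π hπ, hf.2]⟩

end IsIrrChar

lemma Representation.character_mem_closure_isIrrChar {G V : Type*} [Group G] [Finite G]
    [AddCommGroup V] [Module ℂ V] [FiniteDimensional ℂ V] (ρ : Representation ℂ G V) :
    ρ.character ∈ AddSubmonoid.closure {f | IsIrrChar G f} := by
  induction hn : Module.finrank ℂ V using Nat.strong_induction_on generalizing V with
  | _ n ih =>
    rcases subsingleton_or_nontrivial V with hV | hV
    · convert! AddSubmonoid.zero_mem _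
      ext g
      simp [Representation.character, Subsingleton.elim (ρ g) 0]
    by_cases hρ : ρ.IsIrreducible
    · exact AddSubmonoid.subset_closure (Representation.IsIrreducible.isIrrChar ρ)
    obtain ⟨p, q, hpq, hp, hq, h⟩ := ρ.exists_character_eq_add hρ
    have hadd := Submodule.finrank_add_eq_of_isCompl hpq
    have hp' := Submodule.one_le_finrank_iff.2 hp
    have hq' := Submodule.one_le_finrank_iff.2 hq
    rw [h]
    exact AddSubmonoid.add_mem _ (ih _ (by omega) p.toRepresentation rfl)
      (ih _ (by omega) q.toRepresentation rfl)

lemma regularCharacter_mem_closure_isIrrChar (G : Type*) [Group G] [Finite G] :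
    (fun g : G => if g = 1 then (Nat.card G : ℂ) else 0) ∈
      AddSubmonoid.closure {f | IsIrrChar G f} := by
  have := Fintype.ofFinite G
  convert! (Representation.ofMulAction ℂ G G).character_mem_closure_isIrrChar using 1
  ext g
  rw [Representation.character, LinearMap.trace_eq_matrix_trace ℂ (MonoidAlgebra.basis G ℂ)]
  have hrepr (f : MonoidAlgebra ℂ G) (i : G) : (MonoidAlgebra.basis G ℂ).repr f i = f.coeff i := rfl
  simp [Matrix.trace, LinearMap.toMatrix_apply, hrepr, Finsupp.single_apply]

lemma IsIrrChar.exists_eq_prod {G H : Type*} [Group G] [Finite G] [Group H] [Finite H]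
    {χ : G × H → ℂ} (hχ : IsIrrChar (G × H) χ) :
    ∃ (α : G → ℂ) (β : H → ℂ), IsIrrChar G α ∧ IsIrrChar H β ∧
      χ = (α ∘ Prod.fst) * (β ∘ Prod.snd) := by
  have := Fintype.ofFinite G
  have := Fintype.ofFinite H
  by_contra! hcon
  have hirr (α : G → ℂ) (hα : IsIrrChar G α) (β : H → ℂ) (hβ : IsIrrChar H β) :
      cdot (G × H) χ ((α ∘ Prod.fst) * (β ∘ Prod.snd)) = 0 := by
    by_contra h
    exact hcon α β hα hβ (hχ.eq_of_cdot_ne_zero (hα.prod hβ) h)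
  have hclosure (α : G → ℂ) (hα : α ∈ AddSubmonoid.closure {f | IsIrrChar G f}) (β : H → ℂ)
      (hβ : β ∈ AddSubmonoid.closure {f | IsIrrChar H f}) :
      cdot (G × H) χ ((α ∘ Prod.fst) * (β ∘ Prod.snd)) = 0 := by
    induction hα using AddSubmonoid.closure_induction with
    | mem α hα =>
      induction hβ using AddSubmonoid.closure_induction with
      | mem β hβ => exact hirr α hα β hβ
      | zero => simp [Pi.zero_comp]
      | add β β' _ _ h h' => rw [Pi.add_comp, mul_add, cdot_add_right, h, h', add_zero]
    | zero => simp [Pi.zero_comp]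
    | add α α' _ _ h h' => rw [Pi.add_comp, add_mul, cdot_add_right, h, h', add_zero]
  have h := hclosure _ (regularCharacter_mem_closure_isIrrChar G) _
    (regularCharacter_mem_closure_isIrrChar H)
  rw [cdot_eq_sum, Finset.sum_eq_single (1 : G × H)] at h
  · simp [hχ.apply_one_ne_zero] at h
  · rintro ⟨a, b⟩ - hab
    have : ¬ (a = 1 ∧ b = 1) := fun h => hab (Prod.ext h.1 h.2)
    rcases not_and_or.1 this with h | h <;> simp [h]
  · simp

section Frobenius

variable {G : Type*} [Group G] [Finite G]

lemma cdot_ind (H : Subgroup G) (l : H → ℂ) {χ : G → ℂ} (hχ : IsChar G χ) :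
    cdot G (ind H l) χ = cdot H l (res H χ) := by
  have := Fintype.ofFinite G
  have hG : (Nat.card G : ℂ) ≠ 0 := Nat.cast_ne_zero.2 Nat.card_pos.ne'
  set F : G → ℂ := fun g => if h : g ∈ H then l ⟨g, h⟩ else 0 with hF
  have hconj (x : G) : ∑ g : G, F (x * g * x⁻¹) * (starRingEnd ℂ) (χ g) =
      ∑ g : G, F g * (starRingEnd ℂ) (χ g) := by
    rw [← Equiv.sum_comp (MulAut.conj x).toEquiv (fun g => F g * (starRingEnd ℂ) (χ g))]
    simp [hχ.map_conj]
  have hsum : ∑ g : G, F g * (starRingEnd ℂ) (χ g) =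
      ∑ h : H, l h * (starRingEnd ℂ) (res H χ h) := by
    rw [← Fintype.sum_subtype_add_sum_subtype (· ∈ H),
      Fintype.sum_eq_zero _ fun x : {x // x ∉ H} => by simp [hF, x.2], add_zero]
    refine Finset.sum_congr (by congr!) fun x _ => ?_
    simp [hF, res]
  calc cdot G (ind H l) χ = (Nat.card G : ℂ)⁻¹ * (Nat.card H : ℂ)⁻¹ *
        ∑ g : G, ∑ x : G, F (x * g * x⁻¹) * (starRingEnd ℂ) (χ g) := by
        simp only [cdot_eq_sum, ind, finsum_eq_sum_of_fintype, mul_assoc, Finset.sum_mul,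
          ← Finset.mul_sum, hF]
    _ = cdot H l (res H χ) := by
        rw [Finset.sum_comm, Finset.sum_congr rfl fun x _ => hconj x, Finset.sum_const,
          Finset.card_univ, ← Nat.card_eq_fintype_card, nsmul_eq_mul, hsum, cdot_eq_sum]
        field_simp

end Frobenius

lemma IsIrrChar.exists_cdot_ind_ne_zero {G : Type*} [Group G] [Finite G] {χ : G → ℂ}
    (hχ : IsIrrChar G χ) :
    ∃ (H : Subgroup G) (l : H → ℂ), IsLinearChar H l ∧ cdot G (ind H l) χ ≠ 0 := by
  refine ⟨⊥, fun _ => 1, ⟨1, by ext; simp⟩, ?_⟩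
  rw [cdot_ind _ _ hχ.1, cdot_eq_sum]
  have h1 : ((default : (⊥ : Subgroup G)) : G) = 1 := rfl
  simp [res, h1, hχ.apply_one_ne_zero]

lemma exists_cdot_ind_prod {G H : Type*} [Group G] [Finite G] [Group H] [Finite H]
    {K : Subgroup G} {L : Subgroup H} {l : K → ℂ} {m : L → ℂ} (hl : IsLinearChar K l)
    (hm : IsLinearChar L m) :
    ∃ n : K.prod L → ℂ, IsLinearChar (K.prod L) n ∧
      ∀ (α : G → ℂ) (β : H → ℂ), IsIrrChar G α → IsIrrChar H β →
        cdot (G × H) (ind (K.prod L) n) ((α ∘ Prod.fst) * (β ∘ Prod.snd)) =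
          cdot G (ind K l) α * cdot H (ind L m) β := by
  obtain ⟨l, rfl⟩ := hl
  obtain ⟨m, rfl⟩ := hm
  let e := K.prodEquiv L
  refine ⟨fun x => l (e x).1 * m (e x).2, ⟨(l.coprod m).comp e.toMonoidHom, ?_⟩,
    fun α β hα hβ => ?_⟩
  · ext x
    simp
  · rw [cdot_ind _ _ (hα.prod hβ).1, cdot_ind _ _ hα.1, cdot_ind _ _ hβ.1, ← cdot_prod,
      ← cdot_comp_of_surjective e.toMonoidHom e.surjective]
    rfl

lemma IsAlmostMonomial.prod {G H : Type*} [Group G] [Finite G] [Group H] [Finite H]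
    (hG : IsAlmostMonomial G) (hH : IsAlmostMonomial H) : IsAlmostMonomial (G × H) := by
  intro χ φ hχ hφ hne
  obtain ⟨α, β, hα, hβ, rfl⟩ := hχ.exists_eq_prod
  obtain ⟨α', β', hα', hβ', rfl⟩ := hφ.exists_eq_prod
  by_cases h : α = α'
  · obtain ⟨L, m, hm, hmβ, hmβ'⟩ := hH β β' hβ hβ' (by rintro rfl; exact hne (by rw [h]))
    obtain ⟨K, l, hl, hlα⟩ := hα.exists_cdot_ind_ne_zero
    obtain ⟨n, hn, hcdot⟩ := exists_cdot_ind_prod hl hm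
    refine ⟨K.prod L, n, hn, ?_, ?_⟩
    · rw [hcdot _ _ hα hβ]
      exact mul_ne_zero hlα hmβ
    · rw [hcdot _ _ hα' hβ', hmβ', mul_zero]
  · obtain ⟨K, l, hl, hlα, hlα'⟩ := hG α α' hα hα' h
    obtain ⟨L, m, hm, hmβ⟩ := hβ.exists_cdot_ind_ne_zero
    obtain ⟨n, hn, hcdot⟩ := exists_cdot_ind_prod hl hm
    refine ⟨K.prod L, n, hn, ?_, ?_⟩
    · rw [hcdot _ _ hα hβ]
      exact mul_ne_zero hlα hmβ
    · rw [hcdot _ _ hα' hβ', hlα', zero_mul]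

lemma IsAlmostMonomial.of_surjective {G Q : Type*} [Group G] [Finite G] [Group Q] [Finite Q]
    (hG : IsAlmostMonomial G) (π : G →* Q) (hπ : Function.Surjective π) :
    IsAlmostMonomial Q := by
  intro χ φ hχ hφ hne
  have hχ' := hχ.comp π hπ
  have hφ' := hφ.comp π hπ
  obtain ⟨H, _, ⟨l, rfl⟩, hlχ, hlφ⟩ :=
    hG _ _ hχ' hφ' fun h => hne (hπ.injective_comp_right h)
  rw [cdot_ind _ _ hχ'.1] at hlχ
  rw [cdot_ind _ _ hφ'.1] at hlφ
  let π' := π.subgroupMap H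
  have hπ' : Function.Surjective π' := π.subgroupMap_surjective H
  have hker : π'.ker ≤ l.ker := by
    intro k hk
    have := Fintype.ofFinite H
    rw [cdot_eq_sum] at hlχ
    have hk' : π k = 1 := congrArg Subtype.val hk
    have hshift := Equiv.sum_comp (Equiv.mulLeft k)
      fun h : H => (l h : ℂ) * (starRingEnd ℂ) (res H (χ ∘ π) h)
    simp only [res, Equiv.coe_mulLeft, map_mul, Units.val_mul, Function.comp_apply,
      Subgroup.coe_mul, hk', one_mul, mul_assoc, ← Finset.mul_sum] at hshift
    exact Units.ext (mul_right_cancel₀ (right_ne_zero_of_mul hlχ) (hshift.trans (one_mul _).symm))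
  let m := π'.liftOfSurjective hπ' ⟨l, hker⟩
  have hm (h : H) : m (π' h) = l h := π'.liftOfRightInverse_comp_apply _ _ _ h
  have hcdot (ψ : Q → ℂ) (hψ : IsChar Q ψ) :
      cdot Q (ind (H.map π) fun x => m x) ψ = cdot H (fun x => l x) (res H (ψ ∘ π)) := by
    rw [cdot_ind _ _ hψ, ← cdot_comp_of_surjective π' hπ']
    congr 1
    ext h
    simp [hm]
  refine ⟨H.map π, fun x => m x, ⟨m, rfl⟩, ?_, ?_⟩
  · rwa [hcdot χ hχ.1]
  · rwa [hcdot φ hφ.1]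

theorem stmt11 (G₁ G₂ : Type*) [Group G₁] [Finite G₁] [Group G₂] [Finite G₂] :
    (IsAlmostMonomial G₁ ∧ IsAlmostMonomial G₂) ↔ IsAlmostMonomial (G₁ × G₂) := by
  exact ⟨fun h => h.1.prod h.2, fun h =>
    ⟨h.of_surjective (MonoidHom.fst G₁ G₂) Prod.fst_surjective,
      h.of_surjective (MonoidHom.snd G₁ G₂) Prod.snd_surjective⟩⟩
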